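/- Let χ̃ ∈ C_c^∞(ℝ) with support in [−1,1] and χ̃ = 1 on [−1/2,1/2], and set χ_ℓ(t) = χ̃(log t + ℓ) for ℓ ∈ ℕ. Consider ψ_ℓ(t) = χ_ℓ(t) t^{k+1/2} for fixed k ∈ ℤ. Then with respect to the weighted norm ‖f‖ := ‖t^{-(k+3/2)} f‖_{L²((0,∞); t dt)}, the norms ‖ψ_ℓ‖ are bounded above and below by positive constants independent of ℓ, while ‖t ψ_ℓ'(t) − (k+1/2) ψ_ℓ(t)‖ = ‖χ_ℓ'(log t)... ‖ → 0 is false in general but ‖(t∂_t − (k+1/2))ψ_ℓ‖ stays bounded and, after normalizing, ψ_ℓ/‖ψ_ℓ‖ is a Weyl sequence: ‖(t ∂_t − (k+1/2)) ψ_ℓ‖ / ‖ψ_ℓ‖ does not tend to 0 — instead the correct claim is: ‖ψ_ℓ‖ ≍ 1 and ‖(t∂_t − (k+1/2))ψ_ℓ‖ ≍ 1 but after replacing χ̃ by χ̃(·/L) with L → ∞ one gets ‖(t∂_t − (k+1/2))ψ_ℓ^{(L)}‖/‖ψ_ℓ^{(L)}‖ → 0. Formally: for every ε > 0 there exists a smooth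 compactly supported ψ on (0,∞) with ‖(t∂_t − (k+1/2))ψ‖ ≤ ε ‖ψ‖ in the t^{k+3/2} L²(t dt)-weighted norm. -/

import Mathlib

open MeasureTheory

/-- The function `t ↦ f (log t) * t ^ a` on `(0,∞)`, extended by zero. -/
noncomputable def logCutoffPower (f : ℝ → ℝ) (a t : ℝ) : ℝ :=
  if 0 < t then f (Real.log t) * t ^ a else 0

theorem logCutoffPower_of_pos (f : ℝ → ℝ) (a : ℝ) {t : ℝ} (ht : 0 < t) :
    logCutoffPower f a t = f (Real.log t) * t ^ a := if_pos ht

theorem exists_tsupport_logCutoffPower_subset_Icc {f : ℝ → ℝ} (hf : HasCompactSupport f) (a : ℝ) :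
    ∃ R : ℝ, tsupport (logCutoffPower f a) ⊆ Set.Icc (Real.exp (-R)) (Real.exp R) := by
  obtain ⟨R, hR⟩ := hf.isCompact.isBounded.subset_closedBall 0
  refine ⟨R, closure_minimal (fun t ht => ?_) isClosed_Icc⟩
  have hpos : 0 < t := by
    by_contra h
    exact ht (if_neg h)
  have hne : f (Real.log t) ≠ 0 := by
    intro h
    exact ht (by rw [logCutoffPower_of_pos f a hpos, h, zero_mul])
  have hlog := hR (subset_tsupport f hne)
  rw [mem_closedBall_zero_iff, Real.norm_eq_abs, abs_le] at hlog
  exact ⟨(Real.le_log_iff_exp_le hpos).1 hlog.1, (Real.log_le_iff_le_exp hpos).1 hlog.2⟩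

theorem hasCompactSupport_logCutoffPower {f : ℝ → ℝ} (hf : HasCompactSupport f) (a : ℝ) :
    HasCompactSupport (logCutoffPower f a) := by
  obtain ⟨R, hR⟩ := exists_tsupport_logCutoffPower_subset_Icc hf a
  exact isCompact_Icc.of_isClosed_subset (isClosed_tsupport _) hR

theorem tsupport_logCutoffPower_subset_Ioi {f : ℝ → ℝ} (hf : HasCompactSupport f) (a : ℝ) :
    tsupport (logCutoffPower f a) ⊆ Set.Ioi 0 := by
  obtain ⟨R, hR⟩ := exists_tsupport_logCutoffPower_subset_Icc hf a
  exact fun t ht => (Real.exp_pos _).trans_le (hR ht).1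

theorem logCutoffPower_eventuallyEq (f : ℝ → ℝ) (a : ℝ) {t : ℝ} (ht : 0 < t) :
    logCutoffPower f a =ᶠ[nhds t] fun s => f (Real.log s) * s ^ a := by
  filter_upwards [lt_mem_nhds ht] with s hs using logCutoffPower_of_pos f a hs

theorem contDiff_logCutoffPower {f : ℝ → ℝ} {n : WithTop ℕ∞} (hf : ContDiff ℝ n f)
    (hc : HasCompactSupport f) (a : ℝ) : ContDiff ℝ n (logCutoffPower f a) := by
  refine contDiff_iff_contDiffAt.2 fun t => ?_
  by_cases ht : t ∈ tsupport (logCutoffPower f a)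
  swap
  · exact contDiffAt_const.congr_of_eventuallyEq (notMem_tsupport_iff_eventuallyEq.1 ht)
  have hpos : 0 < t := tsupport_logCutoffPower_subset_Ioi hc a ht
  refine ContDiffAt.congr_of_eventuallyEq ?_ (logCutoffPower_eventuallyEq f a hpos)
  exact (hf.contDiffAt.comp t (Real.contDiffAt_log.2 hpos.ne')).mul
    (Real.contDiffAt_rpow_const_of_ne hpos.ne')

theorem euler_sub_logCutoffPower {f : ℝ → ℝ} (hf : Differentiable ℝ f) (a : ℝ) {t : ℝ}
    (ht : 0 < t) :
    t * deriv (logCutoffPower f a) t - a * logCutoffPower f a t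
      = logCutoffPower (deriv f) a t := by
  have h := ((hf (Real.log t)).hasDerivAt.comp t (Real.hasDerivAt_log ht.ne')).mul
    (Real.hasDerivAt_rpow_const (p := a) (Or.inl ht.ne'))
  have hd : deriv (logCutoffPower f a) t = _ :=
    (h.congr_of_eventuallyEq (logCutoffPower_eventuallyEq f a ht)).deriv
  rw [hd, logCutoffPower_of_pos _ _ ht, logCutoffPower_of_pos _ _ ht, Real.rpow_sub_one ht.ne']
  simp only [Function.comp_apply]
  field_simp
  ring

/-- In the variable `x = log t`, the weighted norm of `f (log t) * t ^ a` is the `L²` norm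
of `f`. -/
theorem integral_weighted_logCutoffPower_sq (f : ℝ → ℝ) (a : ℝ) :
    ∫ t in Set.Ioi (0 : ℝ), (t ^ (-(a + 1)) * logCutoffPower f a t) ^ 2 * t
      = ∫ x, f x ^ 2 := by
  rw [← Real.range_exp, ← Set.image_univ,
    integral_image_eq_integral_abs_deriv_smul MeasurableSet.univ
      (fun x _ => (Real.hasDerivAt_exp x).hasDerivWithinAt) Real.exp_injective.injOn,
    setIntegral_univ]
  refine integral_congr_ae (Filter.Eventually.of_forall fun x => ?_)
  have hmul : Real.exp x ^ (-(a + 1)) * Real.exp x ^ a * Real.exp x = 1 := by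
    rw [← Real.exp_mul, ← Real.exp_mul, ← Real.exp_add, ← Real.exp_add, Real.exp_eq_one_iff]
    ring
  simp only [logCutoffPower_of_pos f a (Real.exp_pos x), Real.log_exp,
    abs_of_pos (Real.exp_pos x), smul_eq_mul]
  linear_combination
    f x ^ 2 * (Real.exp x ^ (-(a + 1)) * Real.exp x ^ a * Real.exp x + 1) * hmul

/-- Slowly varying smooth compactly supported functions: `‖deriv f‖ ≤ ε ‖f‖` in `L²(ℝ)`. -/
theorem exists_contDiff_integral_deriv_sq_le {ε : ℝ} (hε : 0 < ε) :
    ∃ f : ℝ → ℝ, ContDiff ℝ (⊤ : ℕ∞) f ∧ HasCompactSupport f ∧ 0 < ∫ x, f x ^ 2 ∧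
      ∫ x, deriv f x ^ 2 ≤ ε ^ 2 * ∫ x, f x ^ 2 := by
  let χ : ContDiffBump (0 : ℝ) := ⟨1, 2, one_pos, one_lt_two⟩
  have hI : 0 < ∫ x, χ x ^ 2 := by
    refine (χ.continuous.pow 2).integral_pos_of_hasCompactSupport_nonneg_nonzero
      (x := 0) ?_ (fun x => sq_nonneg _) ?_
    · exact χ.hasCompactSupport.comp_left (g := fun y : ℝ => y ^ 2) (by simp)
    · simp [χ.one_of_mem_closedBall (Metric.mem_closedBall_self χ.rIn_pos.le)]
  have hJ : 0 ≤ ∫ x, deriv χ x ^ 2 := integral_nonneg fun x => sq_nonneg _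
  set I := ∫ x, χ x ^ 2
  set J := ∫ x, deriv χ x ^ 2
  have hδ : 0 < ε * √(I / (J + 1)) := by positivity
  have hδsq : (ε * √(I / (J + 1))) ^ 2 * (J + 1) = ε ^ 2 * I := by
    rw [mul_pow, Real.sq_sqrt (by positivity)]
    field_simp
  set δ := ε * √(I / (J + 1))
  have hnorm : ∫ x, χ (δ * x) ^ 2 = δ⁻¹ * I := by
    rw [Measure.integral_comp_mul_left (fun y => χ y ^ 2), abs_of_pos (inv_pos.2 hδ), smul_eq_mul]
  have hderiv : ∫ x, deriv (fun x => χ (δ * x)) x ^ 2 = δ⁻¹ * (δ ^ 2 * J) := by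
    simp only [deriv_comp_mul_left, smul_eq_mul, mul_pow]
    rw [integral_const_mul, Measure.integral_comp_mul_left (fun y => deriv χ y ^ 2),
      abs_of_pos (inv_pos.2 hδ), smul_eq_mul]
    ring
  refine ⟨fun x => χ (δ * x), χ.contDiff.comp (contDiff_const.mul contDiff_id),
    χ.hasCompactSupport.comp_homeomorph (Homeomorph.mulLeft₀ δ hδ.ne'), ?_, ?_⟩
  · rw [hnorm]
    positivity
  · rw [hnorm, hderiv, mul_left_comm (ε ^ 2)]
    refine mul_le_mul_of_nonneg_left ?_ (inv_pos.2 hδ).le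
    nlinarith [sq_nonneg δ]

/-- Weyl-sequence statement at the indicial weight `μ_k = k + 3/2`: for every `ε > 0`
there is a smooth, compactly supported `ψ` on `(0,∞)`, nonzero in the weighted space
`t^{k+3/2} L²((0,∞); t dt)`, with `‖(t∂_t − (k+1/2))ψ‖ ≤ ε ‖ψ‖` in that weighted norm
(stated with squared norms).  Hence `t∂_t − (k+1/2)` does not have closed range there. -/
theorem statement_18 (k : ℤ) :
    ∀ ε : ℝ, 0 < ε → ∃ ψ : ℝ → ℝ,
      ContDiff ℝ (⊤ : ℕ∞) ψ ∧ HasCompactSupport ψ ∧ tsupport ψ ⊆ Set.Ioi 0 ∧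
      0 < (∫ t in Set.Ioi (0 : ℝ), (t ^ (-((k : ℝ) + 3/2)) * ψ t) ^ 2 * t) ∧
      (∫ t in Set.Ioi (0 : ℝ),
          (t ^ (-((k : ℝ) + 3/2)) * (t * deriv ψ t - ((k : ℝ) + 1/2) * ψ t)) ^ 2 * t)
        ≤ ε ^ 2 * ∫ t in Set.Ioi (0 : ℝ), (t ^ (-((k : ℝ) + 3/2)) * ψ t) ^ 2 * t := by
  intro ε hε
  obtain ⟨f, hf, hc, hpos, hle⟩ := exists_contDiff_integral_deriv_sq_le hε
  have hweight : (k : ℝ) + 3 / 2 = (k : ℝ) + 1 / 2 + 1 := by ring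
  rw [hweight]
  refine ⟨logCutoffPower f (k + 1 / 2), contDiff_logCutoffPower hf hc _,
    hasCompactSupport_logCutoffPower hc _, tsupport_logCutoffPower_subset_Ioi hc _, ?_, ?_⟩
  · rwa [integral_weighted_logCutoffPower_sq]
  · rw [integral_weighted_logCutoffPower_sq]
    refine le_of_eq_of_le ?_ hle
    rw [← integral_weighted_logCutoffPower_sq (deriv f) (k + 1 / 2)]
    refine setIntegral_congr_fun measurableSet_Ioi fun t ht => ?_
    simp only [euler_sub_logCutoffPower (hf.differentiable (by simp)) _ (Set.mem_Ioi.1 ht)]
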